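/- Fix an integer d ≥ 2, a unit vector ψ ∈ ℂ^d, and η ∈ [0,1], and set ρ := η|ψ⟩⟨ψ| + ((1−η)/d)·1_d. There exists a single-call deterministic superchannel S satisfying S ⋆ U = U† ρ U for every U ∈ SU(d) (deterministic and exact unitary inversion on the known mixed state ρ) if and only if η ≤ 2/(d²−1). -/

import Mathlib

open Matrix Kronecker BigOperators ComplexOrder

noncomputable section

/-- Entrywise complex conjugate `U̅` of a matrix. -/
def mconj {d : ℕ} (U : Matrix (Fin d) (Fin d) ℂ) : Matrix (Fin d) (Fin d) ℂ :=
  U.map (starRingEnd ℂ)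

/-- Rank-one outer product `|v⟩⟨v|`. -/
def outer {n : Type*} (v : n → ℂ) : Matrix n n ℂ :=
  Matrix.vecMulVec v (star v)

/-- Choi vector `|U⟩⟩ = Σ_i e_i ⊗ U e_i`. -/
def choiVec {d : ℕ} (U : Matrix (Fin d) (Fin d) ℂ) : Fin d × Fin d → ℂ :=
  fun p => U p.2 p.1

/-- `|U⟩⟩⟨⟨U|`. -/
def choiProj {d : ℕ} (U : Matrix (Fin d) (Fin d) ℂ) :
    Matrix (Fin d × Fin d) (Fin d × Fin d) ℂ :=
  outer (choiVec U)

/-- Partial trace over the first tensor factor. -/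
def ptrLeft {α β : Type*} [Fintype α] (S : Matrix (α × β) (α × β) ℂ) :
    Matrix β β ℂ :=
  fun b b' => ∑ a, S (a, b) (a, b')

/-- Partial trace over the second (last) tensor factor. -/
def ptrRight {α β : Type*} [Fintype β] (S : Matrix (α × β) (α × β) ℂ) :
    Matrix α α ℂ :=
  fun a a' => ∑ b, S (a, b) (a', b)

/-- Action `S ⋆ U := Tr_{IO}[ S · (|U̅⟩⟩⟨⟨U̅|_{IO} ⊗ 1_F) ]` of a single-call
supermap `S` on `I ⊗ O ⊗ F` applied to the unitary channel given by `U`. -/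
def act {d dF : ℕ}
    (S : Matrix ((Fin d × Fin d) × Fin dF) ((Fin d × Fin d) × Fin dF) ℂ)
    (U : Matrix (Fin d) (Fin d) ℂ) : Matrix (Fin dF) (Fin dF) ℂ :=
  ptrLeft (S * (choiProj (mconj U) ⊗ₖ (1 : Matrix (Fin dF) (Fin dF) ℂ)))

/-- A single-call deterministic superchannel (channels-to-states):
`S ≥ 0` with `Tr_F(S) = σ ⊗ 1_d`, `σ ≥ 0`, `Tr σ = 1`. -/
def IsSuperchannel {d dF : ℕ}
    (S : Matrix ((Fin d × Fin d) × Fin dF) ((Fin d × Fin d) × Fin dF) ℂ) : Prop :=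
  S.PosSemidef ∧
    ∃ σ : Matrix (Fin d) (Fin d) ℂ, σ.PosSemidef ∧ σ.trace = 1 ∧
      ptrRight S = σ ⊗ₖ (1 : Matrix (Fin d) (Fin d) ℂ)

/-!
For the swap operator `K` on the input and future factors, `K ⊗ ρᵀ` (`ρᵀ` on the output factor)
sends every `U` to `U† ρ U`. The sesquilinear form polarising the action of the difference of a
superchannel `S` and `K ⊗ ρᵀ` therefore vanishes on the diagonal at every unitary. Inserting
`1 + (c - 1) p` for projections `p` and phases `c`, it vanishes at all pairs `|v⟩⟨w|`, `|v'⟩⟨w'|`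
with `v ⊥ v'` and `w ⊥ w'`. Applied to sums and differences of orthonormal vectors, this shows that
for orthonormal eigenvectors `v, v'` of `ρ`, with eigenvalues differing by `δ`, the slices `G, G'`
of `S` at `v̅, v̅'` satisfy `G - G' = δ K + 1 ⊗ N`. Both slices have trace `1`, so `tr N = -δ` and
`tr K(G - G') = δ (d² - 1)`; this is at most `2`, because `(1 ± K) / 2` are projections.

Conversely, `S = 1 ⊗ X + K ⊗ Z` is positive as soon as `X ± Z` are, and `Z = ρᵀ - (tr X) 1` makes
it send `U` to `U† ρ U`. The trace condition `d X + Z = 1 / d` then leaves only `tr X` free, and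
`X ± Z` become positive multiples of `(ρ - m)ᵀ` and `(m + 2 / (d² - 1) - ρ)ᵀ`, where the real
number `m` is determined by `tr X`.
-/

section StarAlgebra

variable {A E : Type*} [Ring A] [StarRing A] [Algebra ℂ A] [StarModule ℂ A]
  [AddCommGroup E] [Module ℂ E]

lemma one_add_smul_mem_unitary {p : A} (hp : IsStarProjection p) {c : ℂ} (hc : c ∈ unitary ℂ) :
    1 + (c - 1) • p ∈ unitary A := by
  have mul_eq_one : ∀ z : ℂ, z * star z = 1 →
      (1 + (z - 1) • p) * (1 + (star z - 1) • p) = 1 := by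
    intro z hz
    calc (1 + (z - 1) • p) * (1 + (star z - 1) • p)
        = 1 + (z * star z - 1) • p := by
          simp only [mul_add, add_mul, one_mul, mul_one, smul_mul_smul_comm, hp.isIdempotentElem.eq]
          module
      _ = 1 := by rw [hz, sub_self, zero_smul, add_zero]
  have star_eq : star (1 + (c - 1) • p) = 1 + (star c - 1) • p := by
    rw [star_add, star_one, star_smul, hp.isSelfAdjoint.star_eq, star_sub, star_one]
  rw [Unitary.mem_iff, star_eq]
  refine ⟨?_, mul_eq_one c (Unitary.mul_star_self_of_mem hc)⟩
  simpa only [star_star] using mul_eq_one (star c) (by simpa using Unitary.star_mul_self_of_mem hc)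

lemma isStarProjection_half_one_add {s : A} (hs : IsSelfAdjoint s) (hss : s * s = 1) :
    IsStarProjection ((2⁻¹ : ℂ) • (1 + s)) where
  isIdempotentElem := by
    simp only [IsIdempotentElem, smul_mul_smul_comm, add_mul, mul_add, hss, one_mul, mul_one]
    module
  isSelfAdjoint := by simp [IsSelfAdjoint, star_smul, hs.star_eq]

lemma sesquilin_proj_mul_self {B : A →ₗ[ℂ] A →ₗ⋆[ℂ] E} (hB : ∀ u ∈ unitary A, B u u = 0)
    {p u : A} (hp : IsStarProjection p) (hu : u ∈ unitary A) :
    B (p * u) u = B (p * u) (p * u) := by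
  have expand : ∀ c ∈ unitary ℂ, (c - 1) • B (p * u) u + (star c - 1) • B u (p * u) +
      ((c - 1) * (star c - 1)) • B (p * u) (p * u) = 0 := by
    intro c hc
    have h := hB _ (mul_mem (one_add_smul_mem_unitary hp hc) hu)
    simp only [add_mul, one_mul, smul_mul_assoc, map_add, map_smul, map_smulₛₗ,
      LinearMap.add_apply, LinearMap.smul_apply, hB u hu] at h
    rw [← h]
    simp only [starRingEnd_apply, star_sub, star_one]
    module
  have at_neg_one := expand (-1) (by simp [Unitary.mem_iff])
  have at_I := expand Complex.I (by simp [Unitary.mem_iff])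
  simp only [star_neg, star_one, RCLike.star_def, Complex.conj_I] at at_neg_one at_I
  have hI : (Complex.I - 1) * (-Complex.I - 1) = 2 := by linear_combination -Complex.I_sq
  rw [hI] at at_I
  have two_I_smul : (2 * Complex.I) • (B (p * u) u - B (p * u) (p * u)) = 0 := by
    linear_combination (norm := module) at_I - ((Complex.I + 1) / 2) • at_neg_one
  exact sub_eq_zero.1 ((smul_eq_zero.1 two_I_smul).resolve_left (by simp))

lemma sesquilin_proj_mul_proj_mul {B : A →ₗ[ℂ] A →ₗ⋆[ℂ] E} (hB : ∀ u ∈ unitary A, B u u = 0)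
    {p q u : A} (hp : IsStarProjection p) (hq : IsStarProjection q) (hpq : p * q = 0)
    (hu : u ∈ unitary A) : B (p * u) (q * u) = 0 := by
  have hr := sesquilin_proj_mul_self hB hp hu
  have hu' : (1 + ((-1 : ℂ) - 1) • q) * u ∈ unitary A :=
    mul_mem (one_add_smul_mem_unitary hq (by simp [Unitary.mem_iff])) hu
  have hpu' : p * ((1 + ((-1 : ℂ) - 1) • q) * u) = p * u := by
    rw [← mul_assoc, mul_add, mul_one, mul_smul_comm, hpq, smul_zero, add_zero]
  have h := sesquilin_proj_mul_self hB hp hu'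
  rw [hpu', ← hr, add_mul, one_mul, map_add, add_eq_left, smul_mul_assoc, map_smulₛₗ] at h
  exact (smul_eq_zero.1 h).resolve_left (by norm_num)

end StarAlgebra

section UnitaryMatrices

variable {n : Type*} [Fintype n]

lemma isStarProjection_outer {v : n → ℂ} (hv : star v ⬝ᵥ v = 1) : IsStarProjection (outer v) where
  isIdempotentElem := by simp [IsIdempotentElem, outer, vecMulVec_mul_vecMulVec, hv]
  isSelfAdjoint := by simp [IsSelfAdjoint, outer, star_eq_conjTranspose]

lemma trace_outer (v : n → ℂ) : (outer v).trace = star v ⬝ᵥ v := by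
  rw [outer, trace_vecMulVec, dotProduct_comm]

variable [DecidableEq n]

lemma exists_smul_mem_specialUnitaryGroup [Nonempty n] {U : Matrix n n ℂ}
    (hU : U ∈ unitaryGroup n ℂ) : ∃ c ∈ unitary ℂ, c • U ∈ specialUnitaryGroup n ℂ := by
  have hdet : ‖U.det‖ = 1 := CStarRing.norm_of_mem_unitary (det_of_mem_unitary hU)
  have hdet₀ : U.det ≠ 0 := norm_ne_zero_iff.1 (by rw [hdet]; exact one_ne_zero)
  obtain ⟨c, hc⟩ := IsAlgClosed.exists_pow_nat_eq U.det⁻¹ (Fintype.card_pos (α := n))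
  have norm_c : ‖c‖ = 1 := by
    rw [← pow_eq_one_iff_of_nonneg (norm_nonneg c) (Fintype.card_ne_zero (α := n)), ← norm_pow,
      hc, norm_inv, hdet, inv_one]
  have c_mem : c ∈ unitary ℂ := by
    simp [Unitary.mem_iff, Complex.mul_conj', Complex.conj_mul', norm_c]
  refine ⟨c, c_mem, mem_specialUnitaryGroup_iff.2 ⟨Unitary.smul_mem_of_mem c_mem hU, ?_⟩⟩
  rw [det_smul, hc, inv_mul_cancel₀ hdet₀]

lemma exists_mem_unitaryGroup_eq_smul_col {f : n → n → ℂ}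
    (hf : Pairwise fun i j => star (f i) ⬝ᵥ f j = 0) :
    ∃ V ∈ unitaryGroup n ℂ, ∃ c : n → ℂ, ∀ i, f i = c i • V.col i := by
  set F : n → EuclideanSpace ℂ n := fun i => WithLp.toLp 2 (f i)
  have orthonormal : Orthonormal ℂ ({i | F i ≠ 0}.domRestrict fun i => (‖F i‖⁻¹ : ℂ) • F i) := by
    refine ⟨fun i => norm_smul_inv_norm i.2, fun i j hij => ?_⟩
    have hFij : inner ℂ (F i) (F j) = 0 := by
      rw [EuclideanSpace.inner_toLp_toLp, dotProduct_comm, hf (Subtype.coe_ne_coe.2 hij)]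
    simp only [Set.domRestrict_apply, inner_smul_left, inner_smul_right, hFij, mul_zero]
  obtain ⟨b, hb⟩ := orthonormal.exists_orthonormalBasis_extension_of_card_eq finrank_euclideanSpace
  refine ⟨_, (EuclideanSpace.basisFun n ℂ).toMatrix_orthonormalBasis_mem_unitary b,
    fun i => ‖F i‖, fun i => ?_⟩
  have F_eq : F i = (‖F i‖ : ℂ) • b i := by
    by_cases hi : F i = 0
    · simp [hi]
    · rw [hb i hi, smul_inv_smul₀ (by simpa using hi)]
  ext k
  simpa [F, Module.Basis.toMatrix_apply] using congrArg (fun x : EuclideanSpace ℂ n => x k) F_eq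

lemma exists_mem_unitaryGroup_eq_smul_col_pair {a b : n} (hab : a ≠ b) {v v' : n → ℂ}
    (hv : star v ⬝ᵥ v' = 0) :
    ∃ V ∈ unitaryGroup n ℂ, ∃ c c' : ℂ, v = c • V.col a ∧ v' = c' • V.col b := by
  have hv' : star v' ⬝ᵥ v = 0 := by rw [← star_star v, star_dotProduct_star, hv, star_zero]
  have orthogonal : Pairwise fun i j =>
      star (if i = a then v else if i = b then v' else 0) ⬝ᵥ
        (if j = a then v else if j = b then v' else 0) = 0 := by
    intro i j hij
    split_ifs <;> simp_all
  obtain ⟨V, hV, c, hc⟩ := exists_mem_unitaryGroup_eq_smul_col orthogonal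
  exact ⟨V, hV, c a, c b, by simpa using hc a, by simpa [hab.symm] using hc b⟩

lemma star_col_dotProduct_col {V : Matrix n n ℂ} (hV : V ∈ unitaryGroup n ℂ) (i j : n) :
    star (V.col i) ⬝ᵥ V.col j = (1 : Matrix n n ℂ) i j :=
  congrFun₂ (mem_unitaryGroup_iff'.1 hV) i j

lemma outer_col_mul {V : Matrix n n ℂ} (hV : V ∈ unitaryGroup n ℂ) (W : Matrix n n ℂ) (i : n) :
    outer (V.col i) * (V * Wᴴ) = vecMulVec (V.col i) (star (W.col i)) := by
  have star_col_vecMul : star (V.col i) ᵥ* V = Pi.single i 1 := by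
    ext j
    exact (star_col_dotProduct_col hV i j).trans (by simp [one_apply, Pi.single_apply, eq_comm])
  rw [outer, vecMulVec_mul, ← vecMul_vecMul, star_col_vecMul, single_one_vecMul]
  rfl

end UnitaryMatrices

section SesquilinearOnUnitaries

variable {n E : Type*} [Fintype n] [DecidableEq n] [Nontrivial n] [AddCommGroup E] [Module ℂ E]
  {B : Matrix n n ℂ →ₗ[ℂ] Matrix n n ℂ →ₗ⋆[ℂ] E} {v v' w w' : n → ℂ}

lemma sesquilin_vecMulVec_eq_zero (hB : ∀ U ∈ unitaryGroup n ℂ, B U U = 0)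
    (hv : star v ⬝ᵥ v' = 0) (hw : star w ⬝ᵥ w' = 0) :
    B (vecMulVec v (star w)) (vecMulVec v' (star w')) = 0 := by
  obtain ⟨a, b, hab⟩ := exists_pair_ne n
  obtain ⟨V, hV, c, c', rfl, rfl⟩ := exists_mem_unitaryGroup_eq_smul_col_pair hab hv
  obtain ⟨W, hW, e, e', rfl, rfl⟩ := exists_mem_unitaryGroup_eq_smul_col_pair hab hw
  have isStarProjection (i : n) : IsStarProjection (outer (V.col i)) :=
    isStarProjection_outer ((star_col_dotProduct_col hV i i).trans (one_apply_eq i))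
  have outer_mul_outer : outer (V.col a) * outer (V.col b) = 0 := by
    rw [outer, outer, vecMulVec_mul_vecMulVec, star_col_dotProduct_col hV, one_apply_ne hab,
      zero_smul, vecMulVec_zero]
  have h := sesquilin_proj_mul_proj_mul hB (isStarProjection a) (isStarProjection b)
    outer_mul_outer (mul_mem hV (Unitary.star_mem hW))
  rw [star_eq_conjTranspose, outer_col_mul hV, outer_col_mul hV] at h
  simp [vecMulVec_smul, smul_vecMulVec, h]

lemma sesquilin_vecMulVec_eq_of_norm_eq (hB : ∀ U ∈ unitaryGroup n ℂ, B U U = 0)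
    (hv : star v ⬝ᵥ v' = 0) (hvv : star v ⬝ᵥ v = star v' ⬝ᵥ v') (hw : star w ⬝ᵥ w' = 0) :
    B (vecMulVec v (star w)) (vecMulVec v (star w')) =
      B (vecMulVec v' (star w)) (vecMulVec v' (star w')) := by
  have hv' : star v' ⬝ᵥ v = 0 := by rw [← star_star v, star_dotProduct_star, hv, star_zero]
  have add_sub : star (v + v') ⬝ᵥ (v - v') = 0 := by
    simp [add_dotProduct, dotProduct_sub, hv, hv', hvv]
  have h := sesquilin_vecMulVec_eq_zero hB add_sub hw
  simp only [add_vecMulVec, sub_vecMulVec, map_add, map_sub, LinearMap.add_apply,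
    sesquilin_vecMulVec_eq_zero hB hv hw, sesquilin_vecMulVec_eq_zero hB hv' hw] at h
  simpa [sub_eq_zero] using h

lemma exists_sesquilin_vecMulVec_sub_eq (hB : ∀ U ∈ unitaryGroup n ℂ, B U U = 0)
    (hv : star v ⬝ᵥ v' = 0) (hvv : star v ⬝ᵥ v = star v' ⬝ᵥ v') :
    ∃ e : E, ∀ i j : n,
      B (vecMulVec v (Pi.single i 1)) (vecMulVec v (Pi.single j 1)) -
          B (vecMulVec v' (Pi.single i 1)) (vecMulVec v' (Pi.single j 1)) =
        if i = j then e else 0 := by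
  set N : n → n → E := fun i j =>
    B (vecMulVec v (Pi.single i 1)) (vecMulVec v (Pi.single j 1)) -
      B (vecMulVec v' (Pi.single i 1)) (vecMulVec v' (Pi.single j 1)) with hN
  have star_single (i : n) : star (Pi.single i 1 : n → ℂ) = Pi.single i 1 := by
    rw [← Pi.single_star, star_one]
  have off_diag {i j : n} (hij : i ≠ j) : N i j = 0 := by
    have h := sesquilin_vecMulVec_eq_of_norm_eq hB hv hvv
      (w := Pi.single i 1) (w' := Pi.single j 1) (by simp [star_single, hij])
    rw [star_single, star_single] at h
    exact sub_eq_zero.2 h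
  have diag {i j : n} (hij : i ≠ j) : N i i = N j j := by
    have h := sesquilin_vecMulVec_eq_of_norm_eq hB hv hvv
      (w := Pi.single i 1 + Pi.single j 1) (w' := Pi.single i 1 - Pi.single j 1)
      (by simp [star_single, hij, hij.symm])
    have polar : N i i - N i j + (N j i - N j j) = 0 := by
      rw [← sub_eq_zero] at h
      rw [← h]
      simp only [hN, star_add, star_sub, star_single, vecMulVec_add, vecMulVec_sub, map_add,
        map_sub, LinearMap.add_apply]
      abel
    simpa [off_diag hij, off_diag hij.symm, add_neg_eq_zero] using polar
  obtain ⟨k⟩ := (inferInstance : Nonempty n)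
  refine ⟨N k k, fun i j => ?_⟩
  split_ifs with hij
  · obtain rfl | hik := eq_or_ne i k
    · rw [hij]
    · exact hij ▸ diag hik
  · exact off_diag hij

end SesquilinearOnUnitaries

section PositiveSemidefinite

variable {n : Type*} [Fintype n]

lemma posSemidef_of_isStarProjection {p : Matrix n n ℂ} (hp : IsStarProjection p) :
    p.PosSemidef := by
  have hpp : pᴴ * p = p := by
    rw [← star_eq_conjTranspose, hp.isSelfAdjoint.star_eq, hp.isIdempotentElem.eq]
  exact hpp ▸ posSemidef_conjTranspose_mul_self p

variable [DecidableEq n] {s G : Matrix n n ℂ}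

lemma trace_add_trace_mul_nonneg (hs : IsSelfAdjoint s) (hss : s * s = 1) (hG : G.PosSemidef) :
    0 ≤ G.trace + (s * G).trace := by
  set p : Matrix n n ℂ := (2⁻¹ : ℂ) • (1 + s) with hp
  have hproj : IsStarProjection p := isStarProjection_half_one_add hs hss
  have trace_compression : G.trace + (s * G).trace = 2 * (p * G * pᴴ).trace := by
    rw [trace_mul_comm _ pᴴ, ← star_eq_conjTranspose, hproj.isSelfAdjoint.star_eq, ← mul_assoc,
      hproj.isIdempotentElem.eq, hp, smul_mul_assoc, trace_smul, add_mul, one_mul, trace_add,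
      smul_eq_mul, mul_inv_cancel_left₀ two_ne_zero]
  rw [trace_compression]
  exact mul_nonneg zero_le_two (hG.mul_mul_conjTranspose_same p).trace_nonneg

end PositiveSemidefinite

section SwapMatrix

variable (n : Type*) [DecidableEq n]

/-- The swap operator `e i ⊗ e j ↦ e j ⊗ e i` on `ℂⁿ ⊗ ℂⁿ`. -/
def swapMatrix : Matrix (n × n) (n × n) ℂ :=
  (1 : Matrix (n × n) (n × n) ℂ).submatrix Prod.swap id

variable {n}

lemma swapMatrix_apply (p q : n × n) : swapMatrix n p q = if p.swap = q then 1 else 0 :=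
  one_apply

lemma isSelfAdjoint_swapMatrix : IsSelfAdjoint (swapMatrix n) := by
  ext p q
  simp [star_apply, swapMatrix_apply, Prod.swap_eq_iff_eq_swap, eq_comm (a := p)]

variable [Fintype n]

lemma swapMatrix_mul {m : Type*} (M : Matrix (n × n) m ℂ) :
    swapMatrix n * M = M.submatrix Prod.swap id := by
  ext p q
  simp [mul_apply, swapMatrix_apply]

lemma swapMatrix_mul_self : swapMatrix n * swapMatrix n = 1 := by
  rw [swapMatrix_mul, swapMatrix, submatrix_submatrix, Prod.swap_swap_eq, Function.comp_id,
    submatrix_id_id]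

lemma trace_swapMatrix_mul_kronecker (A B : Matrix n n ℂ) :
    (swapMatrix n * (A ⊗ₖ B)).trace = (A * B).trace := by
  rw [swapMatrix_mul, trace_mul_comm]
  simp [trace, mul_apply, Fintype.sum_prod_type, mul_comm]

lemma trace_swapMatrix : (swapMatrix n).trace = Fintype.card n := by
  simpa using trace_swapMatrix_mul_kronecker (1 : Matrix n n ℂ) 1

lemma ptrRight_swapMatrix : ptrRight (swapMatrix n) = 1 := by
  ext i j
  simp [ptrRight, swapMatrix_apply, one_apply, Prod.ext_iff, ite_and]

end SwapMatrix

section Slices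

variable {α β γ : Type*}

/-- The tensor product `M ⊗ Z` of an operator `M` on the outer factors of `α ⊗ β ⊗ γ` with an
operator `Z` on the middle factor `β`. -/
def kronMiddle (M : Matrix (α × γ) (α × γ) ℂ) (Z : Matrix β β ℂ) :
    Matrix ((α × β) × γ) ((α × β) × γ) ℂ :=
  (M ⊗ₖ Z).submatrix (fun p => ((p.1.1, p.2), p.1.2)) (fun p => ((p.1.1, p.2), p.1.2))

lemma kronMiddle_apply (M : Matrix (α × γ) (α × γ) ℂ) (Z : Matrix β β ℂ) (i j : α) (o o' : β)
    (f f' : γ) : kronMiddle M Z ((i, o), f) ((j, o'), f') = M (i, f) (j, f') * Z o o' :=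
  rfl

lemma ptrRight_kronMiddle [Fintype γ] (M : Matrix (α × γ) (α × γ) ℂ) (Z : Matrix β β ℂ) :
    ptrRight (kronMiddle M Z) = ptrRight M ⊗ₖ Z := by
  ext p q
  simp [ptrRight, kronMiddle, Finset.sum_mul]

lemma posSemidef_kronMiddle [Finite α] [Finite β] [Finite γ]
    {M : Matrix (α × γ) (α × γ) ℂ} {Z : Matrix β β ℂ} (hM : M.PosSemidef) (hZ : Z.PosSemidef) :
    (kronMiddle M Z).PosSemidef :=
  (hM.kronecker hZ).submatrix _

variable [Fintype β]

/-- The partial expectation `⟨v̅| S |v̅⟩` of an operator `S` on `α ⊗ β ⊗ γ` in the state `v̅` of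
the middle factor `β`. -/
def outputSlice (S : Matrix ((α × β) × γ) ((α × β) × γ) ℂ) (v : β → ℂ) :
    Matrix (α × γ) (α × γ) ℂ :=
  of fun p q => ∑ o, ∑ o', S ((p.1, o), p.2) ((q.1, o'), q.2) * (v o * star (v o'))

lemma outputSlice_kronMiddle (M : Matrix (α × γ) (α × γ) ℂ) (Z : Matrix β β ℂ) (v : β → ℂ) :
    outputSlice (kronMiddle M Z) v = (star v ⬝ᵥ Zᵀ *ᵥ v) • M := by
  ext p q
  simp only [outputSlice, of_apply, kronMiddle_apply, Matrix.smul_apply, smul_eq_mul, dotProduct,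
    mulVec, Finset.sum_mul, Finset.mul_sum, Pi.star_apply, transpose_apply]
  rw [Finset.sum_comm]
  exact Finset.sum_congr rfl fun _ _ => Finset.sum_congr rfl fun _ _ => by ring

lemma posSemidef_outputSlice [Finite α] [Finite γ] {S : Matrix ((α × β) × γ) ((α × β) × γ) ℂ}
    (hS : S.PosSemidef) (v : β → ℂ) : (outputSlice S v).PosSemidef := by
  classical
  cases nonempty_fintype α
  cases nonempty_fintype γ
  set W : Matrix ((α × β) × γ) (α × γ) ℂ :=
    of fun p q => if (p.1.1, p.2) = q then star (v p.1.2) else 0 with hW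
  have slice_eq : outputSlice S v = Wᴴ * S * W := by
    ext p q
    simp only [outputSlice, hW, mul_apply, conjTranspose_apply, of_apply, Fintype.sum_prod_type,
      Prod.ext_iff, ite_and, apply_ite star, star_star, star_zero, ite_mul, mul_ite, zero_mul,
      mul_zero, Finset.sum_ite_irrel, Finset.sum_ite_eq', Finset.sum_const_zero,
      Finset.mem_univ, if_true, Finset.sum_mul]
    rw [Finset.sum_comm]
    exact Finset.sum_congr rfl fun _ _ => Finset.sum_congr rfl fun _ _ => by ring
  exact slice_eq ▸ hS.conjTranspose_mul_mul_same W

lemma trace_outputSlice [Fintype α] [DecidableEq β] [Fintype γ]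
    {S : Matrix ((α × β) × γ) ((α × β) × γ) ℂ} {σ : Matrix α α ℂ}
    (hS : ptrRight S = σ ⊗ₖ (1 : Matrix β β ℂ)) (v : β → ℂ) :
    (outputSlice S v).trace = σ.trace * (star v ⬝ᵥ v) := by
  have sum_eq (i : α) (o o' : β) :
      ∑ f, S ((i, o), f) ((i, o'), f) = σ i i * (1 : Matrix β β ℂ) o o' :=
    congrFun₂ hS (i, o) (i, o')
  calc (outputSlice S v).trace
      = ∑ i, ∑ o, ∑ o', (∑ f, S ((i, o), f) ((i, o'), f)) * (v o * star (v o')) := by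
        simp only [trace, outputSlice, diag_apply, of_apply, Fintype.sum_prod_type, Finset.sum_mul]
        refine Finset.sum_congr rfl fun i _ => ?_
        rw [Finset.sum_comm]
        exact Finset.sum_congr rfl fun o _ => Finset.sum_comm
    _ = ∑ i, ∑ o, σ i i * (star (v o) * v o) := by
        simp [sum_eq, one_apply, mul_comm (v _)]
    _ = σ.trace * (star v ⬝ᵥ v) := by
        simp [trace, dotProduct, Finset.sum_mul_sum]

end Slices

section Action

variable {d dF : ℕ}

lemma act_apply (S : Matrix ((Fin d × Fin d) × Fin dF) ((Fin d × Fin d) × Fin dF) ℂ)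
    (U : Matrix (Fin d) (Fin d) ℂ) (f f' : Fin dF) :
    act S U f f' = ∑ p, ∑ q, S (p, f) (q, f') * (U p.2 p.1 * star (U q.2 q.1)) := by
  simp only [act, ptrLeft]
  refine Finset.sum_congr rfl fun p _ => ?_
  rw [mul_apply, Fintype.sum_prod_type]
  simp [kroneckerMap_apply, one_apply, choiProj, outer, choiVec, mconj, vecMulVec_apply,
    mul_comm (U p.2 p.1)]

lemma act_add (S T : Matrix ((Fin d × Fin d) × Fin dF) ((Fin d × Fin d) × Fin dF) ℂ)
    (U : Matrix (Fin d) (Fin d) ℂ) : act (S + T) U = act S U + act T U := by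
  ext f f'
  simp only [act_apply, Matrix.add_apply, add_mul, Finset.sum_add_distrib]

lemma act_kronMiddle_one (X : Matrix (Fin d) (Fin d) ℂ) {U : Matrix (Fin d) (Fin d) ℂ}
    (hU : U ∈ unitaryGroup (Fin d) ℂ) :
    act (kronMiddle (1 : Matrix (Fin d × Fin dF) (Fin d × Fin dF) ℂ) X) U = X.trace • 1 := by
  have row_dotProduct (o o' : Fin d) :
      ∑ i, U o i * star (U o' i) = (1 : Matrix (Fin d) (Fin d) ℂ) o o' :=
    congrFun₂ (mem_unitaryGroup_iff.1 hU) o o'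
  ext f f'
  calc act (kronMiddle (1 : Matrix (Fin d × Fin dF) (Fin d × Fin dF) ℂ) X) U f f'
      = (∑ o, ∑ o', X o o' * ∑ i, U o i * star (U o' i)) * (1 : Matrix _ _ ℂ) f f' := by
        simp only [act_apply, Fintype.sum_prod_type, kronMiddle_apply, one_apply, Prod.ext_iff,
          ite_and, ite_mul, mul_ite, one_mul, zero_mul, mul_one, mul_zero, Finset.sum_ite_irrel,
          Finset.sum_const_zero, Finset.sum_ite_eq, Finset.mem_univ, if_true, Finset.mul_sum]
        rw [Finset.sum_comm]
        exact if_congr Iff.rfl (Finset.sum_congr rfl fun _ _ => Finset.sum_comm) rfl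
    _ = (X.trace • (1 : Matrix (Fin dF) (Fin dF) ℂ)) f f' := by
        simp only [row_dotProduct]
        simp [one_apply, trace]

lemma act_kronMiddle_swapMatrix (Z U : Matrix (Fin d) (Fin d) ℂ) :
    act (kronMiddle (swapMatrix (Fin d)) Z) U = Uᴴ * Zᵀ * U := by
  ext f f'
  simp only [act_apply, Fintype.sum_prod_type, kronMiddle_apply, swapMatrix_apply,
    Prod.swap_prod_mk, Prod.ext_iff, ite_and, ite_mul, one_mul, zero_mul, Finset.sum_ite_irrel,
    Finset.sum_const_zero, Finset.sum_ite_eq, Finset.sum_ite_eq', Finset.mem_univ, if_true,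
    mul_apply, conjTranspose_apply, transpose_apply, Finset.sum_mul]
  exact Finset.sum_congr rfl fun _ _ => Finset.sum_congr rfl fun _ _ => by ring

/-- The polarisation of `U ↦ act S U`, which is quadratic in the matrix `U`. -/
def actForm (S : Matrix ((Fin d × Fin d) × Fin dF) ((Fin d × Fin d) × Fin dF) ℂ) :
    Matrix (Fin d) (Fin d) ℂ →ₗ[ℂ] Matrix (Fin d) (Fin d) ℂ →ₗ⋆[ℂ] Matrix (Fin dF) (Fin dF) ℂ :=
  LinearMap.mk₂'ₛₗ (RingHom.id ℂ) (starRingEnd ℂ)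
    (fun A B => of fun f f' => ∑ p, ∑ q, S (p, f) (q, f') * (A p.2 p.1 * star (B q.2 q.1)))
    (fun A A' B => by ext; simp [add_mul, mul_add, Finset.sum_add_distrib])
    (fun c A B => by ext; simp [Finset.mul_sum, mul_left_comm, mul_assoc])
    (fun A B B' => by ext; simp [mul_add, Finset.sum_add_distrib])
    (fun c A B => by ext; simp [Finset.mul_sum, mul_left_comm])

lemma actForm_self (S : Matrix ((Fin d × Fin d) × Fin dF) ((Fin d × Fin d) × Fin dF) ℂ)
    (U : Matrix (Fin d) (Fin d) ℂ) : actForm S U U = act S U := by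
  ext f f'
  exact (act_apply S U f f').symm

lemma actForm_vecMulVec_single
    (S : Matrix ((Fin d × Fin d) × Fin dF) ((Fin d × Fin d) × Fin dF) ℂ) (v : Fin d → ℂ)
    (i j : Fin d) (f f' : Fin dF) :
    actForm S (vecMulVec v (Pi.single i 1)) (vecMulVec v (Pi.single j 1)) f f' =
      outputSlice S v (i, f) (j, f') := by
  simp [actForm, outputSlice, vecMulVec_apply, Fintype.sum_prod_type, Pi.single_apply,
    apply_ite (starRingEnd ℂ)]

lemma actForm_self_eq_of_act_eq [Nonempty (Fin d)]
    {S T : Matrix ((Fin d × Fin d) × Fin dF) ((Fin d × Fin d) × Fin dF) ℂ}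
    (h : ∀ U ∈ specialUnitaryGroup (Fin d) ℂ, act S U = act T U) {U : Matrix (Fin d) (Fin d) ℂ}
    (hU : U ∈ unitaryGroup (Fin d) ℂ) : actForm S U U = actForm T U U := by
  obtain ⟨c, hc, hcU⟩ := exists_smul_mem_specialUnitaryGroup hU
  have hc₀ : c ≠ 0 := by
    rintro rfl
    simp [Unitary.mem_iff] at hc
  have h' := h _ hcU
  simpa [← actForm_self, hc₀] using h'

lemma exists_outputSlice_sub_eq [Nontrivial (Fin d)]
    {S T : Matrix ((Fin d × Fin d) × Fin dF) ((Fin d × Fin d) × Fin dF) ℂ}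
    (h : ∀ U ∈ specialUnitaryGroup (Fin d) ℂ, act S U = act T U) {v v' : Fin d → ℂ}
    (hv : star v ⬝ᵥ v' = 0) (hvv : star v ⬝ᵥ v = star v' ⬝ᵥ v') :
    ∃ N : Matrix (Fin dF) (Fin dF) ℂ, outputSlice S v - outputSlice S v' =
      outputSlice T v - outputSlice T v' + (1 : Matrix (Fin d) (Fin d) ℂ) ⊗ₖ N := by
  obtain ⟨N, hN⟩ := exists_sesquilin_vecMulVec_sub_eq (B := actForm S - actForm T)
    (fun U hU => sub_eq_zero.2 (actForm_self_eq_of_act_eq h hU)) hv hvv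
  refine ⟨N, ?_⟩
  ext ⟨i, f⟩ ⟨j, f'⟩
  have hN' := congrFun₂ (hN i j) f f'
  simp only [LinearMap.sub_apply, Matrix.sub_apply, actForm_vecMulVec_single] at hN'
  have kron : ((1 : Matrix (Fin d) (Fin d) ℂ) ⊗ₖ N) (i, f) (j, f') =
      (if i = j then N else 0) f f' := by
    split_ifs with hij <;> simp [one_apply, hij]
  rw [Matrix.add_apply, kron, ← hN', Matrix.sub_apply, Matrix.sub_apply]
  ring

end Action

section Inversion

variable {d : ℕ} {ρ : Matrix (Fin d) (Fin d) ℂ}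

lemma exists_outputSlice_sub_eq_smul_swapMatrix_add [Nontrivial (Fin d)]
    {S : Matrix ((Fin d × Fin d) × Fin d) ((Fin d × Fin d) × Fin d) ℂ}
    (h : ∀ U ∈ specialUnitaryGroup (Fin d) ℂ, act S U = Uᴴ * ρ * U) {v v' : Fin d → ℂ}
    (hvv' : star v ⬝ᵥ v' = 0) (hvv : star v ⬝ᵥ v = star v' ⬝ᵥ v') :
    ∃ N : Matrix (Fin d) (Fin d) ℂ, outputSlice S v - outputSlice S v' =
      (star v ⬝ᵥ ρ *ᵥ v - star v' ⬝ᵥ ρ *ᵥ v') • swapMatrix (Fin d) +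
        (1 : Matrix (Fin d) (Fin d) ℂ) ⊗ₖ N := by
  have act_eq : ∀ U ∈ specialUnitaryGroup (Fin d) ℂ,
      act S U = act (kronMiddle (swapMatrix (Fin d)) ρᵀ) U := fun U hU => by
    rw [h U hU, act_kronMiddle_swapMatrix, transpose_transpose]
  obtain ⟨N, hN⟩ := exists_outputSlice_sub_eq act_eq hvv' hvv
  refine ⟨N, hN.trans ?_⟩
  rw [outputSlice_kronMiddle, outputSlice_kronMiddle, transpose_transpose, ← sub_smul]

lemma sub_mul_le_two_of_isSuperchannel [Nontrivial (Fin d)]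
    {S : Matrix ((Fin d × Fin d) × Fin d) ((Fin d × Fin d) × Fin d) ℂ} (hS : IsSuperchannel S)
    (h : ∀ U ∈ specialUnitaryGroup (Fin d) ℂ, act S U = Uᴴ * ρ * U) {v v' : Fin d → ℂ}
    (hv : star v ⬝ᵥ v = 1) (hv' : star v' ⬝ᵥ v' = 1) (hvv' : star v ⬝ᵥ v' = 0) :
    (star v ⬝ᵥ ρ *ᵥ v - star v' ⬝ᵥ ρ *ᵥ v') * ((d : ℂ) ^ 2 - 1) ≤ 2 := by
  obtain ⟨hpos, σ, -, hσ, hptr⟩ := hS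
  set gap := star v ⬝ᵥ ρ *ᵥ v - star v' ⬝ᵥ ρ *ᵥ v'
  set G := outputSlice S v
  set G' := outputSlice S v'
  obtain ⟨N, hN⟩ : ∃ N : Matrix (Fin d) (Fin d) ℂ,
      G - G' = gap • swapMatrix (Fin d) + (1 : Matrix (Fin d) (Fin d) ℂ) ⊗ₖ N :=
    exists_outputSlice_sub_eq_smul_swapMatrix_add h hvv' (hv.trans hv'.symm)
  have trace_G : G.trace = 1 := by rw [trace_outputSlice hptr, hσ, hv, mul_one]
  have trace_G' : G'.trace = 1 := by rw [trace_outputSlice hptr, hσ, hv', mul_one]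
  have trace_N : N.trace = -gap := by
    have hd : (d : ℂ) ≠ 0 := by
      simpa using Fintype.card_ne_zero (α := Fin d)
    have trace_eq := congrArg trace hN
    rw [trace_sub, trace_G, trace_G', trace_add, trace_smul, trace_swapMatrix, trace_kronecker,
      trace_one, Fintype.card_fin, smul_eq_mul] at trace_eq
    exact mul_left_cancel₀ hd (by linear_combination -trace_eq)
  have trace_swap : (swapMatrix (Fin d) * G).trace - (swapMatrix (Fin d) * G').trace =
      gap * ((d : ℂ) ^ 2 - 1) := by
    rw [← trace_sub, ← mul_sub, hN, mul_add, mul_smul_comm, swapMatrix_mul_self, trace_add,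
      trace_smul, trace_swapMatrix_mul_kronecker, one_mul, trace_N, trace_one,
      Fintype.card_prod, Fintype.card_fin, smul_eq_mul]
    push_cast
    ring
  have antisymmetric_part := trace_add_trace_mul_nonneg (G := G) isSelfAdjoint_swapMatrix.neg
    (by rw [neg_mul_neg, swapMatrix_mul_self]) (posSemidef_outputSlice hpos v)
  have symmetric_part := trace_add_trace_mul_nonneg (G := G') isSelfAdjoint_swapMatrix
    swapMatrix_mul_self (posSemidef_outputSlice hpos v')
  rw [neg_mul, trace_neg, trace_G] at antisymmetric_part
  rw [trace_G'] at symmetric_part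
  rw [← trace_swap, ← sub_nonneg]
  convert add_nonneg antisymmetric_part symmetric_part using 1
  ring

lemma posSemidef_kronMiddle_one_add_swapMatrix {n β : Type*} [Finite n] [DecidableEq n]
    [Finite β] {X Z : Matrix β β ℂ} (hadd : (X + Z).PosSemidef) (hsub : (X - Z).PosSemidef) :
    (kronMiddle 1 X + kronMiddle (swapMatrix n) Z).PosSemidef := by
  cases nonempty_fintype n
  have symmetric : ((2⁻¹ : ℂ) • (1 + swapMatrix n)).PosSemidef :=
    posSemidef_of_isStarProjection
      (isStarProjection_half_one_add isSelfAdjoint_swapMatrix swapMatrix_mul_self)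
  have antisymmetric : ((2⁻¹ : ℂ) • (1 + -swapMatrix n)).PosSemidef :=
    posSemidef_of_isStarProjection (isStarProjection_half_one_add isSelfAdjoint_swapMatrix.neg
      (by rw [neg_mul_neg, swapMatrix_mul_self]))
  convert (posSemidef_kronMiddle symmetric hadd).add (posSemidef_kronMiddle antisymmetric hsub)
    using 1
  ext ⟨⟨i, o⟩, f⟩ ⟨⟨j, o'⟩, f'⟩
  simp only [Matrix.add_apply, Matrix.sub_apply, Matrix.smul_apply, Matrix.neg_apply,
    kronMiddle_apply, smul_eq_mul]
  ring

lemma ptrRight_add {α β : Type*} [Fintype β] (S T : Matrix (α × β) (α × β) ℂ) :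
    ptrRight (S + T) = ptrRight S + ptrRight T := by
  ext
  simp [ptrRight, Finset.sum_add_distrib]

lemma ptrRight_one {α β : Type*} [Fintype β] [DecidableEq α] [DecidableEq β] :
    ptrRight (1 : Matrix (α × β) (α × β) ℂ) = (Fintype.card β : ℂ) • (1 : Matrix α α ℂ) := by
  ext i j
  simp [ptrRight, one_apply, Prod.ext_iff]

lemma isSuperchannel_kronMiddle_one_add_swapMatrix [NeZero d] {X Z : Matrix (Fin d) (Fin d) ℂ}
    (hadd : (X + Z).PosSemidef) (hsub : (X - Z).PosSemidef)
    (hXZ : (d : ℂ) • X + Z = (d : ℂ)⁻¹ • 1) :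
    IsSuperchannel (kronMiddle 1 X + kronMiddle (swapMatrix (Fin d)) Z) := by
  refine ⟨posSemidef_kronMiddle_one_add_swapMatrix hadd hsub, (d : ℂ)⁻¹ • 1,
    PosSemidef.one.smul (by positivity), ?_, ?_⟩
  · simp [NeZero.ne]
  · rw [ptrRight_add, ptrRight_kronMiddle, ptrRight_kronMiddle, ptrRight_one, ptrRight_swapMatrix,
      Fintype.card_fin, smul_kronecker, ← kronecker_smul, ← kronecker_add, hXZ, kronecker_smul,
      smul_kronecker]

lemma act_kronMiddle_one_add_swapMatrix (X : Matrix (Fin d) (Fin d) ℂ)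
    {U : Matrix (Fin d) (Fin d) ℂ} (hU : U ∈ unitaryGroup (Fin d) ℂ) :
    act (kronMiddle 1 X + kronMiddle (swapMatrix (Fin d)) (ρᵀ - X.trace • 1)) U = Uᴴ * ρ * U := by
  have hUU : Uᴴ * U = 1 := mem_unitaryGroup_iff'.1 hU
  rw [act_add, act_kronMiddle_one X hU, act_kronMiddle_swapMatrix, transpose_sub,
    transpose_transpose, transpose_smul, transpose_one, mul_sub, sub_mul, mul_smul_comm, mul_one,
    smul_mul_assoc, hUU, add_sub_cancel]

lemma exists_isSuperchannel_of_posSemidef [Nontrivial (Fin d)] {m : ℝ} (htr : ρ.trace = 1)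
    (lower : (ρ - m • 1).PosSemidef)
    (upper : ((m + 2 / ((d : ℝ) ^ 2 - 1)) • 1 - ρ).PosSemidef) :
    ∃ S : Matrix ((Fin d × Fin d) × Fin d) ((Fin d × Fin d) × Fin d) ℂ, IsSuperchannel S ∧
      ∀ U ∈ specialUnitaryGroup (Fin d) ℂ, act S U = Uᴴ * ρ * U := by
  have hd : (1 : ℝ) < d := by exact_mod_cast Fin.nontrivial_iff_two_le.1 ‹_›
  have hd₀ : (d : ℝ) ≠ 0 := by positivity
  have hd₁ : (d : ℝ) - 1 ≠ 0 := sub_ne_zero.2 hd.ne'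
  have hd₂ : (d : ℝ) ^ 2 - 1 ≠ 0 := by nlinarith
  have : NeZero d := ⟨mod_cast hd₀⟩
  obtain ⟨z, hz⟩ : ∃ z : ℝ, d * (d - 1) * z = d * (d - 1) * m + 1 :=
    ⟨m + 1 / (d * (d - 1)), by field_simp⟩
  set X : Matrix (Fin d) (Fin d) ℂ := (d : ℝ)⁻¹ • ((d : ℝ)⁻¹ • 1 - (ρᵀ - z • 1)) with hX
  have add_eq : X + (ρᵀ - z • 1) = (((d : ℝ) - 1) / d) • (ρ - m • 1)ᵀ := by
    rw [transpose_sub, transpose_smul, transpose_one]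
    match_scalars <;> field_simp
    · linear_combination -hz
    · ring
  have sub_eq : X - (ρᵀ - z • 1) =
      (((d : ℝ) + 1) / d) • ((m + 2 / ((d : ℝ) ^ 2 - 1)) • 1 - ρ)ᵀ := by
    rw [transpose_sub, transpose_smul, transpose_one]
    match_scalars <;> field_simp
    · linear_combination ((d : ℝ) + 1) ^ 2 * hz
    · ring
  have trace_X : X.trace • (1 : Matrix (Fin d) (Fin d) ℂ) = z • 1 := by
    simp [hX, htr, NeZero.ne, mul_comm]
  refine ⟨kronMiddle 1 X + kronMiddle (swapMatrix (Fin d)) (ρᵀ - z • 1),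
    isSuperchannel_kronMiddle_one_add_swapMatrix ?_ ?_ ?_, fun U hU => ?_⟩
  · rw [add_eq]
    exact lower.transpose.smul (by positivity)
  · rw [sub_eq]
    exact upper.transpose.smul (by positivity)
  · ext i j
    simp [hX, NeZero.ne]
  · rw [← trace_X, act_kronMiddle_one_add_swapMatrix X (specialUnitaryGroup_le_unitaryGroup hU)]

lemma sub_le_of_isSuperchannel [Nontrivial (Fin d)]
    {S : Matrix ((Fin d × Fin d) × Fin d) ((Fin d × Fin d) × Fin d) ℂ} (hS : IsSuperchannel S)
    (h : ∀ U ∈ specialUnitaryGroup (Fin d) ℂ, act S U = Uᴴ * ρ * U) (hρ : ρ.IsHermitian) {x y : ℝ}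
    (hx : x ∈ spectrum ℝ ρ) (hy : y ∈ spectrum ℝ ρ) : x - y ≤ 2 / ((d : ℝ) ^ 2 - 1) := by
  have hd : (1 : ℝ) < d := by exact_mod_cast Fin.nontrivial_iff_two_le.1 ‹_›
  have hd₂ : (0 : ℝ) < (d : ℝ) ^ 2 - 1 := by nlinarith
  rw [hρ.spectrum_real_eq_range_eigenvalues] at hx hy
  obtain ⟨i, rfl⟩ := hx
  obtain ⟨j, rfl⟩ := hy
  obtain rfl | hij := eq_or_ne i j
  · rw [sub_self]
    positivity
  have orthonormal (k l : Fin d) : star (hρ.eigenvectorBasis k).ofLp ⬝ᵥ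
      (hρ.eigenvectorBasis l).ofLp = if k = l then 1 else 0 := by
    rw [dotProduct_comm, ← EuclideanSpace.inner_eq_star_dotProduct]
    exact orthonormal_iff_ite.1 hρ.eigenvectorBasis.orthonormal k l
  have expectation (k : Fin d) : star (hρ.eigenvectorBasis k).ofLp ⬝ᵥ
      ρ *ᵥ (hρ.eigenvectorBasis k).ofLp = hρ.eigenvalues k := by
    rw [hρ.mulVec_eigenvectorBasis, dotProduct_smul, orthonormal, if_pos rfl]
    simp
  have gap_le := sub_mul_le_two_of_isSuperchannel hS h ((orthonormal i i).trans (if_pos rfl))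
    ((orthonormal j j).trans (if_pos rfl)) ((orthonormal i j).trans (if_neg hij))
  rw [expectation, expectation] at gap_le
  rw [le_div_iff₀ hd₂]
  exact_mod_cast gap_le

open scoped MatrixOrder in
lemma exists_isSuperchannel_of_spectrum [Nontrivial (Fin d)] (hρ : ρ.IsHermitian)
    (htr : ρ.trace = 1)
    (h : ∀ x ∈ spectrum ℝ ρ, ∀ y ∈ spectrum ℝ ρ, x - y ≤ 2 / ((d : ℝ) ^ 2 - 1)) :
    ∃ S : Matrix ((Fin d × Fin d) × Fin d) ((Fin d × Fin d) × Fin d) ℂ, IsSuperchannel S ∧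
      ∀ U ∈ specialUnitaryGroup (Fin d) ℂ, act S U = Uᴴ * ρ * U := by
  obtain ⟨m, hm, m_le⟩ := Set.exists_min_image (spectrum ℝ ρ) id finite_real_spectrum
    (ContinuousFunctionalCalculus.spectrum_nonempty ρ hρ)
  have lower := (algebraMap_le_iff_le_spectrum (ha := hρ)).2 m_le
  have upper := (le_algebraMap_iff_spectrum_le (ha := hρ)).2
    fun x hx => sub_le_iff_le_add'.1 (h x hx m hm)
  rw [Algebra.algebraMap_eq_smul_one, Matrix.le_iff] at lower upper
  exact exists_isSuperchannel_of_posSemidef htr lower upper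

theorem mixed_state_deterministic_exact_inversion_general
    (d : ℕ) (hd : 2 ≤ d) (ρ : Matrix (Fin d) (Fin d) ℂ) (hρ : ρ.IsHermitian) (htr : ρ.trace = 1) :
    (∃ S : Matrix ((Fin d × Fin d) × Fin d) ((Fin d × Fin d) × Fin d) ℂ,
        IsSuperchannel S ∧ ∀ U : Matrix (Fin d) (Fin d) ℂ,
          U ∈ Matrix.specialUnitaryGroup (Fin d) ℂ → act S U = Uᴴ * ρ * U) ↔
      ∀ x ∈ spectrum ℝ ρ, ∀ y ∈ spectrum ℝ ρ, x - y ≤ 2 / ((d : ℝ) ^ 2 - 1) := by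
  have : Nontrivial (Fin d) := Fin.nontrivial_iff_two_le.2 hd
  constructor
  · rintro ⟨S, hS, h⟩ x hx y hy
    exact sub_le_of_isSuperchannel hS h hρ hx hy
  · exact exists_isSuperchannel_of_spectrum hρ htr

end Inversion

section IsotropicState

lemma spectrum_eq_pair_of_isIdempotentElem {𝕜 A : Type*} [Field 𝕜] [Ring A] [Algebra 𝕜 A] {p : A}
    (hp : IsIdempotentElem p) (hp₀ : p ≠ 0) (hp₁ : p ≠ 1) : spectrum 𝕜 p = {0, 1} := by
  refine (hp.spectrum_subset 𝕜).antisymm (Set.pair_subset ?_ ?_)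
  · exact (spectrum.zero_mem_iff 𝕜).2 fun h => hp₁ ((IsIdempotentElem.iff_eq_one_of_isUnit h).1 hp)
  · rw [spectrum.mem_iff, map_one]
    exact fun h => hp₀ (by
      simpa using (IsIdempotentElem.iff_eq_one_of_isUnit h).1 hp.one_sub)

lemma spectrum_smul_add_smul_one {𝕜 A : Type*} [Field 𝕜] [Ring A] [Algebra 𝕜 A] {p : A}
    (hp : IsIdempotentElem p) (hp₀ : p ≠ 0) (hp₁ : p ≠ 1) (a c : 𝕜) :
    spectrum 𝕜 (a • p + c • (1 : A)) = {c, a + c} := by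
  have : Nontrivial A := ⟨p, 0, hp₀⟩
  have spectrum_p := spectrum_eq_pair_of_isIdempotentElem (𝕜 := 𝕜) hp hp₀ hp₁
  rw [← Algebra.algebraMap_eq_smul_one, ← spectrum.add_singleton_eq,
    spectrum.smul_eq_smul a p (spectrum_p ▸ Set.insert_nonempty _ _), spectrum_p]
  simp [Set.smul_set_insert, Set.image_pair]

variable {d : ℕ} {ψ : Fin d → ℂ}

lemma spectrum_isotropic (hd : 2 ≤ d) (hψ : star ψ ⬝ᵥ ψ = 1) (η c : ℝ) :
    spectrum ℝ ((η : ℂ) • outer ψ + (c : ℂ) • (1 : Matrix (Fin d) (Fin d) ℂ)) = {c, η + c} := by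
  have trace_eq_one := (trace_outer ψ).trans hψ
  have ne_zero : outer ψ ≠ 0 := by
    intro h
    simp [h] at trace_eq_one
  have ne_one : outer ψ ≠ 1 := by
    intro h
    rw [h, trace_one, Fintype.card_fin, Nat.cast_eq_one] at trace_eq_one
    omega
  rw [Complex.coe_smul, Complex.coe_smul]
  exact spectrum_smul_add_smul_one (isStarProjection_outer hψ).isIdempotentElem ne_zero ne_one η c

lemma isHermitian_isotropic (η c : ℝ) :
    ((η : ℂ) • outer ψ + (c : ℂ) • (1 : Matrix (Fin d) (Fin d) ℂ)).IsHermitian := by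
  simp [IsHermitian, outer]

lemma trace_isotropic (hd : d ≠ 0) (hψ : star ψ ⬝ᵥ ψ = 1) (η : ℝ) :
    ((η : ℂ) • outer ψ + (((1 - η) / d : ℝ) : ℂ) • (1 : Matrix (Fin d) (Fin d) ℂ)).trace = 1 := by
  rw [trace_add, trace_smul, trace_outer, hψ, trace_smul, trace_one, Fintype.card_fin]
  push_cast
  simp [hd]

lemma forall_mem_pair_sub_le_iff {α : Type*} [AddCommGroup α] [PartialOrder α]
    [IsOrderedAddMonoid α] {η δ c : α} (hη : 0 ≤ η) :
    (∀ x ∈ ({c, η + c} : Set α), ∀ y ∈ ({c, η + c} : Set α), x - y ≤ δ) ↔ η ≤ δ := by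
  simp only [Set.forall_mem_insert, Set.mem_singleton_iff, forall_eq, sub_self,
    add_sub_cancel_right, sub_add_cancel_right]
  constructor
  · rintro ⟨-, h, -⟩
    exact h
  · intro h
    have hδ : 0 ≤ δ := hη.trans h
    exact ⟨⟨hδ, (neg_nonpos.2 hη).trans hδ⟩, h, hδ⟩

end IsotropicState

/-- **Deterministic exact unitary inversion on a known mixed state.** With `ρ = η|ψ⟩⟨ψ| + ((1−η)/d)·1`, a single-call deterministic superchannel implementing `U ↦ U† ρ U` for all `U ∈ SU(d)` exists iff `η ≤ 2/(d²−1)`. -/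
theorem mixed_state_deterministic_exact_inversion
    (d : ℕ) (hd : 2 ≤ d) (ψ : Fin d → ℂ) (hψ : star ψ ⬝ᵥ ψ = 1)
    (η : ℝ) (hη : η ∈ Set.Icc (0 : ℝ) 1) :
    (∃ S : Matrix ((Fin d × Fin d) × Fin d) ((Fin d × Fin d) × Fin d) ℂ,
        IsSuperchannel S ∧
        ∀ U : Matrix (Fin d) (Fin d) ℂ, U ∈ Matrix.specialUnitaryGroup (Fin d) ℂ →
          act S U =
            Uᴴ * ((η : ℂ) • outer ψ + (((1 - η) / d : ℝ) : ℂ) • (1 : Matrix (Fin d) (Fin d) ℂ)) * U) ↔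
      η ≤ 2 / ((d : ℝ) ^ 2 - 1) := by
  rw [mixed_state_deterministic_exact_inversion_general d hd _ (isHermitian_isotropic _ _)
    (trace_isotropic (by omega) hψ η), spectrum_isotropic hd hψ, forall_mem_pair_sub_le_iff hη.1]
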